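/- The H-extension B = O(S²_pq) ⊆ O(S³_pq) is not cleft: there exists no ℂ-linear map Φ : H → O(S³_pq) that is both right H-colinear (Δ_R ∘ Φ = (Φ ⊗ id_H) ∘ Δ) and convolution invertible (i.e. admits a ℂ-linear Ψ : H → O(S³_pq) with Φ(h₍₁₎)Ψ(h₍₂₎) = ε(h)·1 = Ψ(h₍₁₎)Φ(h₍₂₎) for all h ∈ H, in Sweedler notation). Equivalently, since the elements uⁿ (n ∈ ℤ) are group-like and span H, there is no family (φ_n)_{n∈ℤ} of invertible elements of O(S³_pq) with Δ_R(φ_n) = φ_n ⊗ uⁿ for all n; in particular there is no invertible element φ ∈ O(S³_pq) with Δ_R(φ) = φ ⊗ u. -/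

import Mathlib

noncomputable section

open scoped TensorProduct

namespace S3pq

/-- Free unital ℂ-algebra on the four generators `a, a*, b, b*`. -/
abbrev FA := FreeAlgebra ℂ (Fin 4)

/-- The generator `a`. -/
def Ag : FA := FreeAlgebra.ι ℂ 0
/-- The generator `a' = a*`. -/
def Ag' : FA := FreeAlgebra.ι ℂ 1
/-- The generator `b`. -/
def Bg : FA := FreeAlgebra.ι ℂ 2
/-- The generator `b' = b*`. -/
def Bg' : FA := FreeAlgebra.ι ℂ 3

/-- The defining relations of `O(S³_pq)`. -/
inductive Rel (p q : ℝ) : FA → FA → Prop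
  | ra : Rel p q (Ag' * Ag) ((q : ℂ) • (Ag * Ag') + ((1 - q : ℝ) : ℂ) • 1)
  | rb : Rel p q (Bg' * Bg) ((p : ℂ) • (Bg * Bg') + ((1 - p : ℝ) : ℂ) • 1)
  | rab : Rel p q (Ag * Bg) (Bg * Ag)
  | rab' : Rel p q (Ag * Bg') (Bg' * Ag)
  | ra'b : Rel p q (Ag' * Bg) (Bg * Ag')
  | ra'b' : Rel p q (Ag' * Bg') (Bg' * Ag')
  | rkey : Rel p q ((1 - Ag * Ag') * (1 - Bg * Bg')) 0

/-- The coordinate algebra `O(S³_pq)`. -/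
abbrev O (p q : ℝ) := RingQuot (Rel p q)

variable (p q : ℝ)

/-- `a ∈ O(S³_pq)`. -/
def a : O p q := RingQuot.mkAlgHom ℂ (Rel p q) Ag
/-- `a* ∈ O(S³_pq)`. -/
def a' : O p q := RingQuot.mkAlgHom ℂ (Rel p q) Ag'
/-- `b ∈ O(S³_pq)`. -/
def b : O p q := RingQuot.mkAlgHom ℂ (Rel p q) Bg
/-- `b* ∈ O(S³_pq)`. -/
def b' : O p q := RingQuot.mkAlgHom ℂ (Rel p q) Bg'

/-- The Hopf algebra `H = O(U(1))` of Laurent polynomials `ℂ[u,u⁻¹]`, with `u = T 1`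
group-like. -/
abbrev Hopf := LaurentPolynomial ℂ


open Polynomial in
/-- `y ↦ Q y` on `ℂ[y]`. -/
def sc (Q : ℂ) : ℂ[X] →ₗ[ℂ] ℂ[X] :=
  Polynomial.lsum fun j => (Q ^ j) • (monomial j)

open Polynomial in
/-- the `Q`-derivative on `ℂ[y]`. -/
def dq (Q : ℂ) : ℂ[X] →ₗ[ℂ] ℂ[X] :=
  Polynomial.lsum fun j => (1 - Q ^ j) • (monomial (j - 1))

open Polynomial in
/-- right multiplication by `x`. -/
def rx (Q : ℂ) : ℂ[X][X] →ₗ[ℂ] ℂ[X][X] :=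
  Polynomial.lsum fun i => ((monomial (i + 1)).restrictScalars ℂ) ∘ₗ sc Q +
    ((monomial i).restrictScalars ℂ) ∘ₗ dq Q

open Polynomial in
/-- left multiplication by `a*`. -/
def dl (Q : ℂ) : ℂ[X][X] →ₗ[ℂ[X]] ℂ[X][X] :=
  Polynomial.lsum fun i => (C (Q ^ i) * X : ℂ[X]) • (monomial i) +
    (C (1 - Q ^ i) : ℂ[X]) • (monomial (i - 1))

open Polynomial in
/-- left multiplication by `a`. -/
def xl : ℂ[X][X] →ₗ[ℂ[X]] ℂ[X][X] := LinearMap.mulLeft ℂ[X] X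

open Polynomial in
lemma sc_monomial (Q : ℂ) (j : ℕ) (c : ℂ) : sc Q (monomial j c) = monomial j (Q ^ j * c) := by
  simp [sc, Polynomial.lsum, Polynomial.sum_monomial_index, Polynomial.smul_monomial]

open Polynomial in
lemma dq_monomial (Q : ℂ) (j : ℕ) (c : ℂ) :
    dq Q (monomial j c) = monomial (j - 1) ((1 - Q ^ j) * c) := by
  simp [dq, Polynomial.lsum, Polynomial.sum_monomial_index, Polynomial.smul_monomial]

open Polynomial in
lemma rx_monomial (Q : ℂ) (i : ℕ) (c : ℂ[X]) :
    rx Q (monomial i c) = monomial (i + 1) (sc Q c) + monomial i (dq Q c) := by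
  simp [rx, Polynomial.lsum, Polynomial.sum_monomial_index]

open Polynomial in
lemma dl_monomial (Q : ℂ) (i : ℕ) (c : ℂ[X]) :
    dl Q (monomial i c) = monomial i (C (Q ^ i) * X * c) +
      monomial (i - 1) (C (1 - Q ^ i) * c) := by
  simp only [dl, Polynomial.lsum, LinearMap.coe_mk, AddHom.coe_mk]
  rw [Polynomial.sum_monomial_index _ _ (by simp)]
  simp [Polynomial.smul_monomial]

open Polynomial in
lemma xl_monomial (i : ℕ) (c : ℂ[X]) : xl (monomial i c) = monomial (i + 1) c := by
  simp [xl, Polynomial.X_mul_monomial]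

open Polynomial in
lemma sc_coeff (Q : ℂ) (f : ℂ[X]) (j : ℕ) : (sc Q f).coeff j = Q ^ j * f.coeff j := by
  induction f using Polynomial.induction_on' with
  | add f g hf hg => rw [map_add, coeff_add, hf, hg, coeff_add, mul_add]
  | monomial n c =>
    rw [sc_monomial, coeff_monomial, coeff_monomial]
    split_ifs with h
    · rw [h]
    · simp

open Polynomial in
lemma sc_ne (Q : ℂ) (hQ : Q ≠ 0) (f : ℂ[X]) (hf : f ≠ 0) : sc Q f ≠ 0 := by
  intro h
  apply hf
  ext j
  have := sc_coeff Q f j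
  rw [h] at this
  simpa [hQ] using this.symm

open Polynomial in
lemma rx_coeff (Q : ℂ) (f : ℂ[X][X]) (k : ℕ) :
    (rx Q f).coeff (k + 1) = sc Q (f.coeff k) + dq Q (f.coeff (k + 1)) := by
  induction f using Polynomial.induction_on' with
  | add f g hf hg => simp only [map_add, coeff_add, hf, hg]; abel
  | monomial n c =>
    rw [rx_monomial, coeff_add]
    simp only [coeff_monomial, add_left_inj]
    split_ifs <;> simp

open Polynomial in
lemma rx_step (Q : ℂ) (hQ : Q ≠ 0) (f : ℂ[X][X]) (d : ℕ) (h1 : ∀ k, d < k → f.coeff k = 0)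
    (h2 : f.coeff d ≠ 0) :
    (∀ k, d + 1 < k → (rx Q f).coeff k = 0) ∧ (rx Q f).coeff (d + 1) ≠ 0 := by
  constructor
  · intro k hk
    obtain ⟨k, rfl⟩ : ∃ m, k = m + 1 := ⟨k - 1, by omega⟩
    rw [rx_coeff, h1 k (by omega), h1 (k + 1) (by omega)]
    simp
  · rw [rx_coeff, h1 (d + 1) (by omega)]
    simpa using sc_ne Q hQ _ h2

open Polynomial in
lemma rx_iter (Q : ℂ) (hQ : Q ≠ 0) (f : ℂ[X][X]) (d : ℕ) (h1 : ∀ k, d < k → f.coeff k = 0)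
    (h2 : f.coeff d ≠ 0) (n : ℕ) :
    (∀ k, d + n < k → ((rx Q)^[n] f).coeff k = 0) ∧ ((rx Q)^[n] f).coeff (d + n) ≠ 0 := by
  induction n with
  | zero => exact ⟨h1, h2⟩
  | succ n ih =>
    rw [Function.iterate_succ_apply']
    exact rx_step Q hQ _ _ ih.1 ih.2

open Polynomial in
lemma rx_X_pow (Q : ℂ) (n : ℕ) : rx Q (monomial n 1) = monomial (n + 1) 1 := by
  have h : (1 : ℂ[X]) = monomial 0 1 := rfl
  rw [rx_monomial, h, sc_monomial, dq_monomial]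
  simp

open Polynomial in
lemma rx_xl (Q : ℂ) (f : ℂ[X][X]) : xl (rx Q f) = rx Q (xl f) := by
  induction f using Polynomial.induction_on' with
  | add f g hf hg => simp only [map_add, hf, hg]
  | monomial n c => simp only [rx_monomial, xl_monomial, map_add]

open Polynomial in
lemma rx_dl (Q : ℂ) (f : ℂ[X][X]) : dl Q (rx Q f) = rx Q (dl Q f) := by
  induction f using Polynomial.induction_on' with
  | add f g hf hg => simp only [map_add, hf, hg]
  | monomial i c =>
    induction c using Polynomial.induction_on' with
    | add f g hf hg => simp only [map_add, hf, hg]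
    | monomial j c =>
      have e1 : ∀ (n : ℕ) (z w : ℂ), (C z * X * monomial n w : ℂ[X]) = monomial (n + 1) (z * w) := by
        intro n z w
        rw [mul_assoc, X_mul_monomial, C_mul_monomial]
      simp only [rx_monomial, dl_monomial, map_add, sc_monomial, dq_monomial, e1, C_mul_monomial]
      rcases i with _ | i <;> rcases j with _ | j <;>
        simp only [Nat.add_sub_cancel, pow_zero, sub_self, zero_mul, mul_zero, map_zero, add_zero,
          zero_add, one_mul, Nat.zero_sub]
      all_goals
        simp only [← C_mul_X_pow_eq_monomial, map_mul, map_sub, map_pow, map_one]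
        ring

open Polynomial in
/-- evaluation at `x = μ`, `y = μ⁻¹` -/
def ev (μ : ℂ) : ℂ[X][X] →+* ℂ := eval₂RingHom (evalRingHom μ⁻¹) μ

open Polynomial in
lemma ev_xl (μ : ℂ) (f : ℂ[X][X]) : ev μ (xl f) = μ * ev μ f := by
  simp [ev, xl]

open Polynomial in
lemma ev_dl (Q μ : ℂ) (hμ : μ ≠ 0) (f : ℂ[X][X]) : ev μ (dl Q f) = μ⁻¹ * ev μ f := by
  induction f using Polynomial.induction_on' with
  | add f g hf hg => simp only [map_add, hf, hg, mul_add]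
  | monomial i c =>
    rw [dl_monomial]
    rcases i with _ | i
    · simp [ev]
    · simp [ev, eval₂_monomial]
      field_simp
      ring

open Polynomial in
lemma xl_dl_rel (Q : ℂ) (f : ℂ[X][X]) :
    dl Q (xl f) = Q • xl (dl Q f) + (1 - Q) • f := by
  induction f using Polynomial.induction_on' with
  | add f g hf hg => simp only [map_add, hf, hg, smul_add]; abel
  | monomial i c =>
    have e : ∀ (z : ℂ) (n : ℕ) (c : ℂ[X]), z • (monomial n c) = monomial n (C z * c) := by
      intro z n c
      rw [Polynomial.smul_monomial, Polynomial.smul_eq_C_mul]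
    rcases i with _ | i
    · simp only [xl_monomial, dl_monomial, e, Nat.add_sub_cancel, pow_zero, sub_self,
        map_zero, zero_mul, add_zero, Nat.zero_sub]
      simp only [← C_mul_X_pow_eq_monomial, map_mul, map_sub, map_pow, map_one]
      ring
    · simp only [xl_monomial, dl_monomial, e, map_add, smul_add, Nat.add_sub_cancel]
      simp only [← C_mul_X_pow_eq_monomial, map_mul, map_sub, map_pow, map_one]
      ring

open Polynomial in
/-- Units act by scalars. -/
lemma key {A : Type*} [Ring A] [Algebra ℂ A] (Q : ℂ) (hQ : Q ≠ 0)
    (ρ : A →ₐ[ℂ] Module.End ℂ[X] ℂ[X][X])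
    (hr : ∀ z m, ρ z (rx Q m) = rx Q (ρ z m))
    (χ χ' : A →ₐ[ℂ] ℂ) (μ μ' : ℂ)
    (hχ : ∀ z m, ev μ (ρ z m) = χ z * ev μ m)
    (hχ' : ∀ z m, ev μ' (ρ z m) = χ' z * ev μ' m)
    (φ ψ : A) (h : φ * ψ = 1) : χ φ = χ' φ := by
  set F := ρ φ 1 with hF
  set G := ρ ψ 1 with hG
  have hFG : ρ φ G = 1 := by
    rw [hG, ← Module.End.mul_apply, ← map_mul, h, map_one ρ, Module.End.one_apply]
  have hpow : ∀ n : ℕ, ρ φ (monomial n 1) = (rx Q)^[n] F := by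
    intro n
    induction n with
    | zero => rfl
    | succ n ih => rw [← rx_X_pow Q, hr, ih, Function.iterate_succ_apply']
  have hexp : ρ φ G = ∑ i ∈ Finset.range (G.natDegree + 1), G.coeff i • (rx Q)^[i] F := by
    conv_lhs => rw [G.as_sum_range]
    rw [map_sum]
    refine Finset.sum_congr rfl fun i _ => ?_
    rw [← hpow, ← map_smul, Polynomial.smul_monomial, smul_eq_mul, mul_one]
  have hG0 : G ≠ 0 := by
    intro h0
    rw [h0, map_zero] at hFG
    exact zero_ne_one hFG
  have hF0 : F ≠ 0 := by
    intro h0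
    rw [hexp, h0] at hFG
    have : ∀ i, (rx Q)^[i] (0 : ℂ[X][X]) = 0 := fun i => Function.iterate_fixed (map_zero _) i
    simp [this] at hFG
  have hit := rx_iter Q hQ F F.natDegree (fun k hk => coeff_eq_zero_of_natDegree_lt hk)
    (by simpa using hF0)
  have hc : (ρ φ G).coeff (F.natDegree + G.natDegree) ≠ 0 := by
    rw [hexp, finsetSum_coeff, Finset.sum_range_succ, Finset.sum_eq_zero, zero_add, coeff_smul,
      smul_eq_mul]
    · exact mul_ne_zero (by simpa using hG0) (hit _).2
    · intro i hi
      rw [coeff_smul, (hit i).1 _ (by have := Finset.mem_range.1 hi; omega), smul_zero]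
  rw [hFG, coeff_one] at hc
  have hdeg : F.natDegree = 0 ∧ G.natDegree = 0 := by
    by_contra hne
    exact hc (if_neg (by omega))
  have hFc := eq_C_of_natDegree_eq_zero hdeg.1
  rw [hexp, hdeg.2] at hFG
  simp only [zero_add, Finset.sum_range_one, Function.iterate_zero, id] at hFG
  have hu : IsUnit (F.coeff 0) := by
    have := congrArg (fun f => coeff f 0) hFG
    simp only [coeff_smul, smul_eq_mul, coeff_one_zero] at this
    exact IsUnit.of_mul_eq_one _ (by rw [mul_comm]; exact this)
  obtain ⟨γ, -, hγ⟩ := Polynomial.isUnit_iff.1 hu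
  have hFγ : F = C (C γ) := by rw [hFc, hγ]
  have h1 := hχ φ 1
  have h2 := hχ' φ 1
  rw [← hF, hFγ, map_one, mul_one] at h1 h2
  rw [← h1, ← h2]
  simp [ev]

variable {p q}

lemma O_induction (P : O p q → Prop) (hA : P (a p q)) (hA' : P (a' p q)) (hB : P (b p q))
    (hB' : P (b' p q)) (hs : ∀ c : ℂ, P (algebraMap ℂ _ c))
    (hadd : ∀ x y, P x → P y → P (x + y)) (hmul : ∀ x y, P x → P y → P (x * y)) (z : O p q) :
    P z := by
  obtain ⟨w, rfl⟩ := RingQuot.mkAlgHom_surjective ℂ (Rel p q) z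
  induction w using FreeAlgebra.induction with
  | grade0 r => rw [AlgHom.commutes]; exact hs r
  | grade1 i =>
    fin_cases i
    · exact hA
    · exact hA'
    · exact hB
    · exact hB'
  | mul x y hx hy => rw [map_mul]; exact hmul _ _ hx hy
  | add x y hx hy => rw [map_add]; exact hadd _ _ hx hy

lemma exists_lift {A : Type*} [Ring A] [Algebra ℂ A] (x x' y y' : A)
    (h1 : x' * x = (q : ℂ) • (x * x') + ((1 - q : ℝ) : ℂ) • 1)
    (h2 : y' * y = (p : ℂ) • (y * y') + ((1 - p : ℝ) : ℂ) • 1)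
    (h3 : x * y = y * x) (h4 : x * y' = y' * x) (h5 : x' * y = y * x') (h6 : x' * y' = y' * x')
    (h7 : (1 - x * x') * (1 - y * y') = 0) :
    ∃ f : O p q →ₐ[ℂ] A, f (a p q) = x ∧ f (a' p q) = x' ∧ f (b p q) = y ∧ f (b' p q) = y' := by
  let g : FA →ₐ[ℂ] A := FreeAlgebra.lift ℂ ![x, x', y, y']
  have g1 : g Ag = x := by simp [g, Ag]
  have g2 : g Ag' = x' := by simp [g, Ag']
  have g3 : g Bg = y := by simp [g, Bg]
  have g4 : g Bg' = y' := by simp [g, Bg']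
  have hg : ∀ ⦃u v : FA⦄, Rel p q u v → g u = g v := by
    intro u v huv
    cases huv <;> simp only [map_mul, map_add, map_sub, map_smul, map_one, map_zero, g1, g2, g3, g4]
      <;> assumption
  refine ⟨RingQuot.liftAlgHom ℂ ⟨g, hg⟩, ?_, ?_, ?_, ?_⟩
  · rw [a, RingQuot.liftAlgHom_mkAlgHom_apply, g1]
  · rw [a', RingQuot.liftAlgHom_mkAlgHom_apply, g2]
  · rw [b, RingQuot.liftAlgHom_mkAlgHom_apply, g3]
  · rw [b', RingQuot.liftAlgHom_mkAlgHom_apply, g4]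

lemma relA : a' p q * a p q = (q : ℂ) • (a p q * a' p q) + ((1 - q : ℝ) : ℂ) • 1 := by
  have := RingQuot.mkAlgHom_rel ℂ (Rel.ra (p := p) (q := q))
  simp only [map_mul, map_add, map_smul, map_one] at this
  exact this

lemma relB : b' p q * b p q = (p : ℂ) • (b p q * b' p q) + ((1 - p : ℝ) : ℂ) • 1 := by
  have := RingQuot.mkAlgHom_rel ℂ (Rel.rb (p := p) (q := q))
  simp only [map_mul, map_add, map_smul, map_one] at this
  exact this

lemma char_aux (t : ℝ) (ht : t < 1) (x y : ℂ) (hx : x ≠ 0)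
    (h : y * x = (t : ℂ) • (x * y) + ((1 - t : ℝ) : ℂ) • 1) : y = x⁻¹ := by
  have h1 : ((1 - t : ℝ) : ℂ) ≠ 0 := by
    exact_mod_cast (sub_pos.2 ht).ne'
  have : ((1 - t : ℝ) : ℂ) * (y * x) = ((1 - t : ℝ) : ℂ) * 1 := by
    simp only [smul_eq_mul] at h
    push_cast at h ⊢
    linear_combination h
  exact eq_inv_of_mul_eq_one_left (mul_left_cancel₀ h1 this)

lemma char_a' (hq1 : q < 1) (χ : O p q →ₐ[ℂ] ℂ) (h : χ (a p q) ≠ 0) :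
    χ (a' p q) = (χ (a p q))⁻¹ := by
  apply char_aux q hq1 _ _ h
  rw [← map_mul, relA]
  simp only [map_add, map_smul, map_mul, map_one]

lemma char_b' (hp1 : p < 1) (χ : O p q →ₐ[ℂ] ℂ) (h : χ (b p q) ≠ 0) :
    χ (b' p q) = (χ (b p q))⁻¹ := by
  apply char_aux p hp1 _ _ h
  rw [← map_mul, relB]
  simp only [map_add, map_smul, map_mul, map_one]

lemma scal_rel (t : ℝ) {A : Type*} [Ring A] [Algebra ℂ A] (l : ℂ) (hl : l ≠ 0) :
    algebraMap ℂ A l⁻¹ * algebraMap ℂ A l =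
      (t : ℂ) • (algebraMap ℂ A l * algebraMap ℂ A l⁻¹) + ((1 - t : ℝ) : ℂ) • 1 := by
  rw [← map_mul, ← map_mul, inv_mul_cancel₀ hl, mul_inv_cancel₀ hl, map_one, ← add_smul]
  push_cast
  simp

lemma exists_char (x y : ℂ) (hx : x ≠ 0) (hy : y ≠ 0) :
    ∃ χ : O p q →ₐ[ℂ] ℂ, χ (a p q) = x ∧ χ (b p q) = y := by
  obtain ⟨f, h1, -, h2, -⟩ := exists_lift (p := p) (q := q) (A := ℂ) x x⁻¹ y y⁻¹
    (scal_rel q (A := ℂ) x hx) (scal_rel p (A := ℂ) y hy)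
    (mul_comm _ _) (mul_comm _ _) (mul_comm _ _) (mul_comm _ _) (by simp [hx])
  exact ⟨f, h1, h2⟩

open Polynomial in
lemma End_rel (t : ℝ) : (dl t * xl : Module.End ℂ[X] ℂ[X][X]) =
    (t : ℂ) • (xl * dl t : Module.End ℂ[X] ℂ[X][X]) + ((1 - t : ℝ) : ℂ) • 1 := by
  apply LinearMap.ext
  intro f
  have := xl_dl_rel t f
  push_cast
  exact this

open Polynomial in
lemma End_scal_apply (l : ℂ) (f : ℂ[X][X]) :
    (algebraMap ℂ (Module.End ℂ[X] ℂ[X][X]) l) f = l • f := rfl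

open Polynomial in
lemma ev_smul (μ l : ℂ) (f : ℂ[X][X]) : ev μ (l • f) = l * ev μ f := by
  rw [← algebraMap_smul ℂ[X] l f, ← algebraMap_smul ℂ[X][X] (algebraMap ℂ ℂ[X] l) f, smul_eq_mul,
    map_mul]
  simp [ev]

open Polynomial in
lemma keyA (hq0 : 0 < q) (hq1 : q < 1) (hp1 : p < 1) (χ χ' : O p q →ₐ[ℂ] ℂ)
    (h1 : χ (a p q) ≠ 0) (h1' : χ' (a p q) ≠ 0) (h2 : χ (b p q) ≠ 0)
    (h3 : χ (b p q) = χ' (b p q)) (φ ψ : O p q) (h : φ * ψ = 1) : χ φ = χ' φ := by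
  set l := χ (b p q) with hl
  obtain ⟨ρ, r1, r2, r3, r4⟩ := exists_lift (p := p) (q := q) (A := Module.End ℂ[X] ℂ[X][X])
    xl (dl q) (algebraMap ℂ _ l) (algebraMap ℂ _ l⁻¹) (End_rel q)
    (scal_rel p (A := Module.End ℂ[X] ℂ[X][X]) l h2)
    (Algebra.commutes _ _).symm (Algebra.commutes _ _).symm (Algebra.commutes _ _).symm
    (Algebra.commutes _ _).symm (by rw [← map_mul, mul_inv_cancel₀ h2, map_one, sub_self, mul_zero])
  have hev : ∀ χ : O p q →ₐ[ℂ] ℂ, χ (a p q) ≠ 0 → χ (b p q) = l → ∀ z m,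
      ev (χ (a p q)) (ρ z m) = χ z * ev (χ (a p q)) m := by
    intro χ h1 h3 z
    induction z using O_induction with
    | hA => intro m; rw [r1, ev_xl]
    | hA' => intro m; rw [r2, ev_dl _ _ h1, char_a' hq1 χ h1]
    | hB => intro m; rw [r3, End_scal_apply, ev_smul, h3]
    | hB' => intro m; rw [r4, End_scal_apply, ev_smul, char_b' hp1 χ (h3 ▸ h2), h3]
    | hs c => intro m; rw [AlgHom.commutes, AlgHom.commutes, End_scal_apply, ev_smul]; rfl
    | hadd x y hx hy => intro m; rw [map_add, map_add, LinearMap.add_apply, map_add, hx, hy, add_mul]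
    | hmul x y hx hy => intro m; rw [map_mul, map_mul, Module.End.mul_apply, hx, hy, mul_assoc]
  refine key (q : ℂ) (by exact_mod_cast hq0.ne') ρ ?_ χ χ' _ _ (hev χ h1 rfl)
    (hev χ' h1' h3.symm) φ ψ h
  intro z
  induction z using O_induction with
  | hA => intro m; rw [r1, rx_xl]
  | hA' => intro m; rw [r2, rx_dl]
  | hB => intro m; rw [r3, End_scal_apply, End_scal_apply, map_smul]
  | hB' => intro m; rw [r4, End_scal_apply, End_scal_apply, map_smul]
  | hs c => intro m; rw [AlgHom.commutes, End_scal_apply, End_scal_apply, map_smul]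
  | hadd x y hx hy => intro m; simp only [map_add, LinearMap.add_apply, hx, hy]
  | hmul x y hx hy => intro m; rw [map_mul, Module.End.mul_apply, Module.End.mul_apply, hy, hx]

open Polynomial in
lemma keyB (hp0 : 0 < p) (hp1 : p < 1) (hq1 : q < 1) (χ χ' : O p q →ₐ[ℂ] ℂ)
    (h1 : χ (b p q) ≠ 0) (h1' : χ' (b p q) ≠ 0) (h2 : χ (a p q) ≠ 0)
    (h3 : χ (a p q) = χ' (a p q)) (φ ψ : O p q) (h : φ * ψ = 1) : χ φ = χ' φ := by
  set l := χ (a p q) with hl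
  obtain ⟨ρ, r3, r4, r1, r2⟩ := exists_lift (p := p) (q := q) (A := Module.End ℂ[X] ℂ[X][X])
    (algebraMap ℂ _ l) (algebraMap ℂ _ l⁻¹) xl (dl p) 
    (scal_rel q (A := Module.End ℂ[X] ℂ[X][X]) l h2) (End_rel p)
    (Algebra.commutes _ _) (Algebra.commutes _ _) (Algebra.commutes _ _)
    (Algebra.commutes _ _) (by rw [← map_mul, mul_inv_cancel₀ h2, map_one, sub_self, zero_mul])
  have hev : ∀ χ : O p q →ₐ[ℂ] ℂ, χ (b p q) ≠ 0 → χ (a p q) = l → ∀ z m,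
      ev (χ (b p q)) (ρ z m) = χ z * ev (χ (b p q)) m := by
    intro χ h1 h3 z
    induction z using O_induction with
    | hB => intro m; rw [r1, ev_xl]
    | hB' => intro m; rw [r2, ev_dl _ _ h1, char_b' hp1 χ h1]
    | hA => intro m; rw [r3, End_scal_apply, ev_smul, h3]
    | hA' => intro m; rw [r4, End_scal_apply, ev_smul, char_a' hq1 χ (h3 ▸ h2), h3]
    | hs c => intro m; rw [AlgHom.commutes, AlgHom.commutes, End_scal_apply, ev_smul]; rfl
    | hadd x y hx hy => intro m; rw [map_add, map_add, LinearMap.add_apply, map_add, hx, hy, add_mul]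
    | hmul x y hx hy => intro m; rw [map_mul, map_mul, Module.End.mul_apply, hx, hy, mul_assoc]
  refine key (p : ℂ) (by exact_mod_cast hp0.ne') ρ ?_ χ χ' _ _ (hev χ h1 rfl)
    (hev χ' h1' h3.symm) φ ψ h
  intro z
  induction z using O_induction with
  | hB => intro m; rw [r1, rx_xl]
  | hB' => intro m; rw [r2, rx_dl]
  | hA => intro m; rw [r3, End_scal_apply, End_scal_apply, map_smul]
  | hA' => intro m; rw [r4, End_scal_apply, End_scal_apply, map_smul]
  | hs c => intro m; rw [AlgHom.commutes, End_scal_apply, End_scal_apply, map_smul]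
  | hadd x y hx hy => intro m; simp only [map_add, LinearMap.add_apply, hx, hy]
  | hmul x y hx hy => intro m; rw [map_mul, Module.End.mul_apply, Module.End.mul_apply, hy, hx]

lemma exists_ev : ∃ e : Hopf →ₐ[ℂ] ℂ, e (LaurentPolynomial.T 1) = 2 ∧
    e (LaurentPolynomial.T (-1)) = 2⁻¹ := by
  let u : ℂˣ := Units.mk0 2 two_ne_zero
  let e : Hopf →+* ℂ := LaurentPolynomial.eval₂ (RingHom.id ℂ) u
  refine ⟨{ e with commutes' := ?_ }, ?_, ?_⟩
  · intro r
    change e (LaurentPolynomial.C r) = r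
    simp [e]
  · change e (LaurentPolynomial.T 1) = 2
    exact (LaurentPolynomial.eval₂_T_n (RingHom.id ℂ) u 1).trans (by simp [u])
  · change e (LaurentPolynomial.T (-1)) = 2⁻¹
    exact (LaurentPolynomial.eval₂_T_neg_n (RingHom.id ℂ) u 1).trans (by simp [u])

lemma no_unit (hp0 : 0 < p) (hp1 : p < 1) (hq0 : 0 < q) (hq1 : q < 1)
    (ΔR : O p q →ₐ[ℂ] O p q ⊗[ℂ] Hopf)
    (hΔa : ΔR (a p q) = a p q ⊗ₜ LaurentPolynomial.T 1)
    (hΔb : ΔR (b p q) = b p q ⊗ₜ LaurentPolynomial.T (-1))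
    (φ ψ : O p q) (h : φ * ψ = 1) (hφ : ΔR φ = φ ⊗ₜ LaurentPolynomial.T 1) : False := by
  obtain ⟨e, e1, e2⟩ := exists_ev
  obtain ⟨χ, c1, c2⟩ := exists_char (p := p) (q := q) 1 1 one_ne_zero one_ne_zero
  obtain ⟨χ₁, d1, d2⟩ := exists_char (p := p) (q := q) 2 1 two_ne_zero one_ne_zero
  let χ₂ : O p q →ₐ[ℂ] ℂ :=
    (Algebra.TensorProduct.lift χ e (fun _ _ => Commute.all _ _)).comp ΔR
  have f1 : χ₂ (a p q) = 2 := by simp [χ₂, hΔa, c1, e1]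
  have f2 : χ₂ (b p q) = 2⁻¹ := by simp [χ₂, hΔb, c2, e2]
  have f3 : χ₂ φ = χ φ * 2 := by simp [χ₂, hφ, e1]
  have g1 : χ φ = χ₁ φ := keyA hq0 hq1 hp1 χ χ₁ (by simp [c1]) (by simp [d1]) (by simp [c2])
    (by rw [c2, d2]) φ ψ h
  have g2 : χ₁ φ = χ₂ φ := keyB hp0 hp1 hq1 χ₁ χ₂ (by simp [d2]) (by simp [f2]) (by simp [d1])
    (by rw [d1, f1]) φ ψ h
  have h0 : χ φ = 0 := by
    rw [f3, ← g1] at g2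
    linear_combination -g2
  have := congrArg χ h
  rw [map_mul, h0, zero_mul, map_one] at this
  exact zero_ne_one this

variable (p q)

/-- the `H`-extension `O(S²_pq) ⊆ O(S³_pq)` is not cleft: there is no right
`H`-colinear convolution-invertible linear map `Φ : H → O(S³_pq)` (equivalently, since the
group-likes `uⁿ` form a basis of `H`, no family `(φₙ)` of invertible elements with
`Δ_R(φₙ) = φₙ ⊗ uⁿ`); in particular there is no invertible `φ` with `Δ_R(φ) = φ ⊗ u`. -/
theorem stmt16 (hp0 : 0 < p) (hp1 : p < 1) (hq0 : 0 < q) (hq1 : q < 1)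
    (ΔR : O p q →ₐ[ℂ] O p q ⊗[ℂ] Hopf)
    (hΔa : ΔR (a p q) = a p q ⊗ₜ LaurentPolynomial.T 1)
    (hΔb : ΔR (b p q) = b p q ⊗ₜ LaurentPolynomial.T (-1)) :
    (¬ ∃ Φ Ψ : Hopf →ₗ[ℂ] O p q,
      (∀ n : ℤ, ΔR (Φ (LaurentPolynomial.T n)) =
        Φ (LaurentPolynomial.T n) ⊗ₜ LaurentPolynomial.T n) ∧
      (∀ n : ℤ, Φ (LaurentPolynomial.T n) * Ψ (LaurentPolynomial.T n) = 1 ∧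
        Ψ (LaurentPolynomial.T n) * Φ (LaurentPolynomial.T n) = 1)) ∧
    ¬ ∃ φ : O p q, IsUnit φ ∧ ΔR φ = φ ⊗ₜ LaurentPolynomial.T 1 := by
  refine ⟨?_, ?_⟩
  · rintro ⟨Φ, Ψ, h1, h2⟩
    exact no_unit hp0 hp1 hq0 hq1 ΔR hΔa hΔb _ _ (h2 1).1 (h1 1)
  · rintro ⟨φ, ⟨u, rfl⟩, h⟩
    exact no_unit hp0 hp1 hq0 hq1 ΔR hΔa hΔb _ _ u.mul_inv h

end S3pq
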